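/- Let k be an algebraically closed field, A an associative k-algebra, and let V, W be non-isomorphic simple left A-modules that are finite-dimensional over k, with annihilators 𝔪 = Ann_A(V) and 𝔫 = Ann_A(W) (two-sided maximal ideals of A). If 𝔫 ∩ 𝔪 = 𝔫·𝔪, then Ext¹_A(V,W) = 0. (Hence Ext¹_A(V,W) ≠ 0 implies the existence of a second layer link from 𝔫 to 𝔪.) -/

import Mathlib

open CategoryTheory Opposite

noncomputable section

/-- `Ext¹` of left modules over the `k`-algebra `A` (as a `k`-vector space). -/
def Ext1 (k : Type) [Field k] (A : Type) [Ring A] [Algebra k A]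
    (M N : Type) [AddCommGroup M] [Module A M] [AddCommGroup N] [Module A N] : ModuleCat k :=
  ((Ext k (ModuleCat A) 1).obj (op (ModuleCat.of A M))).obj (ModuleCat.of A N)

/-- A simple module killed by the annihilator of a finite-dimensional simple module `V`
is isomorphic to `V`. -/
lemma aux_simple_iso (k : Type) [Field k] (A : Type) [Ring A] [Algebra k A]
    (V S : Type) [AddCommGroup V] [Module A V] [AddCommGroup S] [Module A S]
    [Module k V] [IsScalarTower k A V] [FiniteDimensional k V]
    [IsSimpleModule A V] [IsSimpleModule A S]
    (h : Module.annihilator A V ≤ Module.annihilator A S) : Nonempty (V ≃ₗ[A] S) := by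
  let b := Module.finBasis k V
  let φ : A →ₗ[A] (Fin (Module.finrank k V) → V) :=
    LinearMap.pi fun i => LinearMap.toSpanSingleton A V (b i)
  obtain ⟨s, hs⟩ : ∃ s : S, s ≠ 0 := by
    have := IsSimpleModule.nontrivial A S
    exact exists_ne 0
  have hker : LinearMap.ker φ ≤ LinearMap.ker (LinearMap.toSpanSingleton A S s) := by
    intro a ha
    have hab : ∀ i, a • b i = 0 := fun i => by
      have := congrFun (LinearMap.mem_ker.mp ha) i
      simpa [φ] using this
    have hc : ∀ (c : k) (v : V), a • (c • v) = c • (a • v) := by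
      intro c v
      rw [← algebraMap_smul A c v, ← algebraMap_smul A c (a • v), smul_smul, smul_smul,
        Algebra.commutes]
    have : a ∈ Module.annihilator A V := by
      rw [Module.mem_annihilator]
      intro v
      rw [← b.sum_repr v, Finset.smul_sum]
      exact Finset.sum_eq_zero fun i _ => by rw [hc, hab, smul_zero]
    have := Module.mem_annihilator.mp (h this) s
    simpa using this
  -- extend to a map from the range of `φ`, then to the power of `V`
  let ψ : LinearMap.range φ →ₗ[A] S :=
    ((LinearMap.ker φ).liftQ (LinearMap.toSpanSingleton A S s) hker).comp
      φ.quotKerEquivRange.symm.toLinearMap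
  obtain ⟨p, hp⟩ := ComplementedLattice.exists_isCompl (LinearMap.range φ)
  let Ψ : (Fin (Module.finrank k V) → V) →ₗ[A] S :=
    ψ.comp ((LinearMap.range φ).projectionOnto p hp)
  have hΨ : Ψ (φ 1) = s := by
    have h1 : (LinearMap.range φ).projectionOnto p hp (φ 1) = ⟨φ 1, ⟨1, rfl⟩⟩ :=
      Submodule.projectionOnto_apply_left hp ⟨φ 1, ⟨1, rfl⟩⟩
    have h2 : φ.quotKerEquivRange.symm ⟨φ 1, ⟨1, rfl⟩⟩ = (LinearMap.ker φ).mkQ 1 := by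
      rw [LinearEquiv.symm_apply_eq]; rfl
    simp only [Ψ, ψ, LinearMap.comp_apply, h1, LinearEquiv.coe_coe, h2]
    simp
  have hex : ∃ i, Ψ.comp (LinearMap.single A (fun _ => V) i) ≠ 0 := by
    by_contra! hcon
    have : Ψ = 0 := LinearMap.pi_ext' fun i => by rw [hcon i]; simp
    rw [this] at hΨ
    exact hs hΨ.symm
  obtain ⟨i, hi⟩ := hex
  exact ⟨LinearEquiv.ofBijective _ (LinearMap.bijective_of_ne_zero hi)⟩

lemma aux_comax (k : Type) [Field k] (A : Type) [Ring A] [Algebra k A]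
    (V W : Type) [AddCommGroup V] [Module A V] [AddCommGroup W] [Module A W]
    [Module k V] [IsScalarTower k A V] [FiniteDimensional k V]
    [Module k W] [IsScalarTower k A W] [FiniteDimensional k W]
    [IsSimpleModule A V] [IsSimpleModule A W]
    (hniso : IsEmpty (V ≃ₗ[A] W)) :
    Module.annihilator A W ⊔ Module.annihilator A V = ⊤ := by
  by_contra hne
  obtain ⟨L, hL, hle⟩ := Ideal.exists_le_maximal _ hne
  have : IsSimpleModule A (A ⧸ L) := isSimpleModule_iff_isCoatom.mpr hL.out
  have key : ∀ I : Ideal A, I.IsTwoSided → I ≤ L → I ≤ Module.annihilator A (A ⧸ L) := by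
    intro I _ hI a ha
    rw [Module.mem_annihilator]
    intro x
    obtain ⟨x, rfl⟩ := L.mkQ_surjective x
    rw [← map_smul, Submodule.mkQ_apply, Submodule.Quotient.mk_eq_zero]
    exact hI (I.mul_mem_right x ha)
  obtain ⟨e1⟩ := aux_simple_iso k A V (A ⧸ L) (key _ inferInstance (le_sup_right.trans hle))
  obtain ⟨e2⟩ := aux_simple_iso k A W (A ⧸ L) (key _ inferInstance (le_sup_left.trans hle))
  exact hniso.false (e1.trans e2.symm)

lemma aux_extend (A : Type) [Ring A] (V W P0 P1 : Type)
    [AddCommGroup V] [Module A V] [AddCommGroup W] [Module A W]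
    [AddCommGroup P0] [Module A P0] [AddCommGroup P1] [Module A P1]
    (hco : Module.annihilator A W ⊔ Module.annihilator A V = ⊤)
    (hprod : Module.annihilator A W ⊓ Module.annihilator A V =
      Ideal.span {x : A | ∃ n ∈ Module.annihilator A W, ∃ m ∈ Module.annihilator A V,
        x = n * m})
    (π : P0 →ₗ[A] V) (d : P1 →ₗ[A] P0) (f : P1 →ₗ[A] W)
    (hπ : ∀ p, π p = 0 → ∃ x, d x = p) (hf : ∀ x, d x = 0 → f x = 0) :
    ∃ g : P0 →ₗ[A] W, ∀ x, g (d x) = f x := by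
  obtain ⟨e, he, ef, hef, hee⟩ := Submodule.mem_sup.mp (hco ▸ Submodule.mem_top : (1 : A) ∈ _)
  have lift : ∀ m ∈ Module.annihilator A V, ∀ p : P0, ∃ x, d x = m • p := fun m hm p =>
    hπ _ (by rw [map_smul]; exact Module.mem_annihilator.mp hm _)
  have hfd : ∀ x y, d x = d y → f x = f y := fun x y h => by
    rw [← sub_eq_zero, ← map_sub]; apply hf; rw [map_sub, h, sub_self]
  -- elements of the intersection act by zero
  have hzero : ∀ c ∈ Module.annihilator A W ⊓ Module.annihilator A V, ∀ p : P0, ∀ x,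
      d x = c • p → f x = 0 := by
    intro c hc p
    rw [hprod] at hc
    suffices ∃ x, d x = c • p ∧ f x = 0 by
      obtain ⟨x, hx, hx0⟩ := this
      intro y hy
      rw [hfd y x (hy.trans hx.symm), hx0]
    induction hc using Submodule.span_induction with
    | mem c h =>
      obtain ⟨n, hn, m, hm, rfl⟩ := h
      obtain ⟨x, hx⟩ := lift m hm p
      refine ⟨n • x, by rw [map_smul, hx, mul_smul], ?_⟩
      rw [map_smul]; exact Module.mem_annihilator.mp hn _
    | zero => exact ⟨0, by simp, by simp⟩
    | add a b _ _ ha hb =>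
      obtain ⟨x, hx, hx0⟩ := ha
      obtain ⟨y, hy, hy0⟩ := hb
      exact ⟨x + y, by rw [map_add, hx, hy, add_smul], by rw [map_add, hx0, hy0, add_zero]⟩
    | smul a b _ hb =>
      obtain ⟨x, hx, hx0⟩ := hb
      exact ⟨a • x, by rw [map_smul, hx, smul_eq_mul, mul_smul], by rw [map_smul, hx0, smul_zero]⟩
  choose s hs using lift ef hef
  refine ⟨{ toFun := fun p => f (s p), map_add' := ?_, map_smul' := ?_ }, ?_⟩
  · intro p q
    rw [← map_add]
    apply hfd
    rw [map_add, hs, hs, hs, smul_add]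
  · intro a p
    rw [RingHom.id_apply, ← sub_eq_zero, ← map_smul, ← map_sub]
    refine hzero (ef * a - a * ef) ⟨?_, ?_⟩ p _ ?_
    · have : ef * a - a * ef = a * e - e * a := by
        rw [← eq_sub_iff_add_eq'] at hee
        rw [hee]; noncomm_ring
      rw [this]
      exact Ideal.sub_mem _ (Ideal.mul_mem_left _ _ he) (Ideal.mul_mem_right _ _ he)
    · exact Ideal.sub_mem _ (Ideal.mul_mem_right _ _ hef) (Ideal.mul_mem_left _ _ hef)
    · rw [map_sub, map_smul, hs, hs, sub_smul, mul_smul, mul_smul]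
  · intro x
    change f (s (d x)) = f x
    have h1 : f (s (d x)) = f (ef • x) := hfd _ _ (by rw [hs, map_smul])
    have h2 : e • f x = 0 := Module.mem_annihilator.mp he _
    calc f (s (d x)) = e • f x + ef • f x := by rw [h1, map_smul, h2, zero_add]
      _ = f x := by rw [← add_smul, hee, one_smul]

/-- for non-isomorphic finite-dimensional simple modules `V`, `W` with
annihilators `𝔪 = Ann_A(V)`, `𝔫 = Ann_A(W)`, if `𝔫 ∩ 𝔪 = 𝔫·𝔪` (no second layer link
from `𝔫` to `𝔪`), then `Ext¹_A(V,W) = 0`. -/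
theorem ext_eq_zero_of_no_second_layer_link
    (k : Type) [Field k] [IsAlgClosed k]
    (A : Type) [Ring A] [Algebra k A]
    (V W : Type) [AddCommGroup V] [Module A V] [AddCommGroup W] [Module A W]
    [Module k V] [IsScalarTower k A V] [FiniteDimensional k V]
    [Module k W] [IsScalarTower k A W] [FiniteDimensional k W]
    (hV : IsSimpleModule A V) (hW : IsSimpleModule A W)
    (hniso : IsEmpty (V ≃ₗ[A] W))
    (hprod : Module.annihilator A W ⊓ Module.annihilator A V =
      Ideal.span {x : A | ∃ n ∈ Module.annihilator A W, ∃ m ∈ Module.annihilator A V,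
        x = n * m}) :
    Subsingleton (Ext1 k A V W) := by
  have hco := aux_comax k A V W hniso
  let P := projectiveResolution (ModuleCat.of A V)
  have hz : Limits.IsZero (Ext1 k A V W) := by
    refine Limits.IsZero.of_iso ?_ (P.isoExt 1 (ModuleCat.of A W))
    rw [← HomologicalComplex.exactAt_iff_isZero_homology,
      HomologicalComplex.exactAt_iff' _ 0 1 2 (by simp) (by simp), ShortComplex.moduleCat_exact_iff]
    intro (f : P.complex.X 1 ⟶ ModuleCat.of A W) hf
    have hfd : P.complex.d 2 1 ≫ f = 0 := hf
    have ex1 := (ShortComplex.moduleCat_exact_iff _).mp (P.exact_succ 0)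
    have ex0 := (ShortComplex.moduleCat_exact_iff _).mp P.exact₀
    obtain ⟨g, hg⟩ := aux_extend A V W (P.complex.X 0) (P.complex.X 1) hco hprod
      (P.π.f 0).hom (P.complex.d 1 0).hom f.hom ex0 (by
        intro x hx
        obtain ⟨y, rfl⟩ := ex1 x hx
        exact congrArg (fun h => h.hom y) hfd)
    refine ⟨(ModuleCat.ofHom g : P.complex.X 0 ⟶ ModuleCat.of A W), ?_⟩
    change P.complex.d 1 0 ≫ ModuleCat.ofHom g = f
    ext x
    exact hg x
  exact ModuleCat.isZero_iff_subsingleton.mp hz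

end
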